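/- arXiv:2402.15139 — 5 statements merged into one kernel-verified Lean document; each statement's English description precedes it below -/
import Mathlib

section
/- Mass decomposition at infinity (core of Theorem 2.2): let N ≥ 1 and let (f_n) be a sequence of measurable functions f_n : ℝ^N → [0,∞) with sup_n ∫_{ℝ^N} f_n dx < ∞. Suppose there is a finite nonnegative Borel measure ν on ℝ^N such that ∫_{ℝ^N} φ f_n dx → ∫_{ℝ^N} φ dν as n → ∞ for every continuous compactly supported φ : ℝ^N → ℝ. Then: (a) the limit ν_∞ := lim_{R→∞} limsup_{n→∞} ∫_{{x : |x| > R}} f_n dx exists (the inner quantity is nonincreasing in R and nonnegative); and (b) limsup_{n→∞} ∫_{ℝ^N} f_n dx = ν(ℝ^N) + ν_∞. -/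
open MeasureTheory Filter Topology

/-! Compare the mass of a tail `Kᶜ` with `∫ (1 - φ)`, where `φ` is a continuous compactly supported
cutoff. Vague convergence gives `limsup ∫ (1 - φ) ∂μᵢ = limsup μᵢ(X) - ∫ φ ∂ν`, and cutoffs equal
to `1` on larger and larger balls push `∫ φ ∂ν` up to `ν(X)`. -/

theorem limsup_sub_of_tendsto {ι R : Type*} [AddCommGroup R] [ConditionallyCompleteLinearOrder R]
    [IsOrderedAddMonoid R] [DenselyOrdered R] [TopologicalSpace R] [OrderTopology R]
    {l : Filter ι} [l.NeBot] {u w : ι → R} {W : R}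
    (hu_le : IsBoundedUnder (· ≤ ·) l u) (hu_ge : IsBoundedUnder (· ≥ ·) l u)
    (hw : Tendsto w l (𝓝 W)) :
    limsup (fun i => u i - w i) l = limsup u l - W := by
  have hw' : Tendsto (-w) l (𝓝 (-W)) := hw.neg
  have h_le := limsup_add_le hu_ge hu_le hw'.isCoboundedUnder_le hw'.isBoundedUnder_le
  have h_ge := le_limsup_add hu_le hu_ge.isCoboundedUnder_le hw'.isBoundedUnder_le
    hw'.isBoundedUnder_ge
  rw [hw'.limsup_eq] at h_le
  rw [hw'.liminf_eq] at h_ge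
  rw [sub_eq_add_neg, ← le_antisymm h_le h_ge]
  simp only [sub_eq_add_neg, Pi.add_def, Pi.neg_apply]

section Integral

variable {X : Type*} [MeasurableSpace X] {μ : Measure X} {s : Set X} {φ f : X → ℝ}

theorem measureReal_le_integral_of_indicator_le (hs : MeasurableSet s) (hφ : Integrable φ μ)
    (h : s.indicator 1 ≤ φ) : μ.real s ≤ ∫ x, φ x ∂μ := by
  rw [← integral_indicator_one hs]
  exact integral_mono_of_nonneg (.of_forall (Set.indicator_nonneg fun _ _ => zero_le_one)) hφ
    (.of_forall h)

theorem integral_le_measureReal_of_le_indicator (hs : MeasurableSet s) (hμs : μ s ≠ ⊤)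
    (hφ : 0 ≤ φ) (h : φ ≤ s.indicator 1) : ∫ x, φ x ∂μ ≤ μ.real s := by
  rw [← integral_indicator_one hs]
  exact integral_mono_of_nonneg (.of_forall hφ)
    ((integrable_indicator_iff hs).2 (integrableOn_const hμs)) (.of_forall h)

theorem measureReal_withDensity_ofReal (hf : Integrable f μ) (hf_nonneg : 0 ≤ᵐ[μ] f)
    (hs : MeasurableSet s) :
    (μ.withDensity fun x => ENNReal.ofReal (f x)).real s = ∫ x in s, f x ∂μ := by
  rw [measureReal_def, withDensity_apply _ hs,
    integral_eq_lintegral_of_nonneg_ae (ae_restrict_of_ae hf_nonneg)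
      hf.aestronglyMeasurable.restrict]

theorem integral_withDensity_ofReal (hf : AEMeasurable f μ) (hf_nonneg : 0 ≤ᵐ[μ] f) (g : X → ℝ) :
    ∫ x, g x ∂(μ.withDensity fun x => ENNReal.ofReal (f x)) = ∫ x, g x * f x ∂μ := by
  rw [integral_withDensity_eq_integral_toReal_smul₀ hf.ennreal_ofReal
    (.of_forall fun _ => ENNReal.ofReal_lt_top)]
  refine integral_congr_ae ?_
  filter_upwards [hf_nonneg] with x hx
  rw [ENNReal.toReal_ofReal hx, smul_eq_mul, mul_comm]

end Integral

theorem tendsto_measure_closedBall_atTop {X : Type*} [PseudoMetricSpace X] [MeasurableSpace X]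
    (ν : Measure X) (o : X) :
    Tendsto (fun R : ℝ => ν (Metric.closedBall o R)) atTop (𝓝 (ν Set.univ)) := by
  have h_union : ⋃ R : ℝ, Metric.closedBall o R = Set.univ :=
    Set.eq_univ_of_forall fun x => Set.mem_iUnion.2 ⟨dist x o, Metric.mem_closedBall.2 le_rfl⟩
  rw [← h_union]
  exact tendsto_measure_iUnion_atTop fun _ _ => Metric.closedBall_subset_closedBall

section Mass

variable {ι X : Type*} {l : Filter ι} [MeasurableSpace X] {μ : ι → Measure X}

theorem isBoundedUnder_ge_measureReal (s : Set X) :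
    IsBoundedUnder (· ≥ ·) l fun i => (μ i).real s :=
  isBoundedUnder_of ⟨0, fun _ => measureReal_nonneg⟩

variable [∀ i, IsFiniteMeasure (μ i)]

theorem isBoundedUnder_le_measureReal
    (hμ : IsBoundedUnder (· ≤ ·) l fun i => (μ i).real Set.univ) (s : Set X) :
    IsBoundedUnder (· ≤ ·) l fun i => (μ i).real s :=
  hμ.mono_le (.of_forall fun _ => measureReal_mono s.subset_univ)

variable [l.NeBot]

theorem limsup_measureReal_nonneg
    (hμ : IsBoundedUnder (· ≤ ·) l fun i => (μ i).real Set.univ) (s : Set X) :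
    0 ≤ limsup (fun i => (μ i).real s) l :=
  le_limsup_of_frequently_le (.of_forall fun _ => measureReal_nonneg)
    (isBoundedUnder_le_measureReal hμ s)

theorem monotone_limsup_measureReal
    (hμ : IsBoundedUnder (· ≤ ·) l fun i => (μ i).real Set.univ) :
    Monotone fun s : Set X => limsup (fun i => (μ i).real s) l := fun s t hst =>
  limsup_le_limsup (.of_forall fun _ => measureReal_mono hst)
    (isBoundedUnder_ge_measureReal s).isCoboundedUnder_le (isBoundedUnder_le_measureReal hμ t)

end Mass

/-- Vague convergence of the measures `μ i` to `ν` along `l`: convergence of the integrals of all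
continuous compactly supported real functions. For measures finite on compact sets these integrals
are genuine, with no junk values. -/
def VaguelyTendsto {ι X : Type*} [TopologicalSpace X] [MeasurableSpace X]
    (μ : ι → Measure X) (l : Filter ι) (ν : Measure X) : Prop :=
  ∀ φ : X → ℝ, Continuous φ → HasCompactSupport φ →
    Tendsto (fun i => ∫ x, φ x ∂μ i) l (𝓝 (∫ x, φ x ∂ν))

theorem exists_continuous_hasCompactSupport_between_indicators {X : Type*} [TopologicalSpace X]
    [RegularSpace X] [LocallyCompactSpace X] {K T : Set X} (hK : IsCompact K)
    (hKT : K ⊆ interior T) :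
    ∃ φ : X → ℝ, Continuous φ ∧ HasCompactSupport φ ∧ 0 ≤ φ ∧
      K.indicator 1 ≤ φ ∧ φ ≤ T.indicator 1 := by
  obtain ⟨φ, hφK, hφT, hφ_supp, hφ_mem⟩ := exists_continuous_one_zero_of_isCompact hK
    isOpen_interior.isClosed_compl (Set.disjoint_compl_right_iff_subset.2 hKT)
  refine ⟨φ, φ.continuous, hφ_supp, fun x => (hφ_mem x).1, ?_, ?_⟩
  · exact Set.indicator_le' (fun x hx => (hφK hx).ge) fun x _ => (hφ_mem x).1
  · exact Set.le_indicator (fun x _ => (hφ_mem x).2) fun x hx =>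
      (hφT fun hx' => hx (interior_subset hx')).le

namespace VaguelyTendsto

variable {ι X : Type*} [TopologicalSpace X] [MeasurableSpace X] {l : Filter ι} [l.NeBot]
  {μ : ι → Measure X} {ν : Measure X}

theorem limsup_measureReal_univ_sub_integral (h : VaguelyTendsto μ l ν)
    (hμ : IsBoundedUnder (· ≤ ·) l fun i => (μ i).real Set.univ)
    {φ : X → ℝ} (hφ : Continuous φ) (hφ_supp : HasCompactSupport φ) :
    limsup (fun i => (μ i).real Set.univ - ∫ x, φ x ∂μ i) l =
      limsup (fun i => (μ i).real Set.univ) l - ∫ x, φ x ∂ν :=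
  limsup_sub_of_tendsto hμ (isBoundedUnder_ge_measureReal _) (h φ hφ hφ_supp)

variable [OpensMeasurableSpace X] [RegularSpace X] [LocallyCompactSpace X]
  [∀ i, IsFiniteMeasure (μ i)] {K T : Set X}

theorem limsup_measureReal_compl_le [IsFiniteMeasureOnCompacts ν] (h : VaguelyTendsto μ l ν)
    (hμ : IsBoundedUnder (· ≤ ·) l fun i => (μ i).real Set.univ)
    (hK : IsCompact K) (hK_meas : MeasurableSet K) (hT : MeasurableSet T)
    (hKT : K ⊆ interior T) :
    limsup (fun i => (μ i).real Tᶜ) l ≤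
      limsup (fun i => (μ i).real Set.univ) l - ν.real K := by
  obtain ⟨φ, hφ, hφ_supp, hφ_nonneg, hKφ, hφT⟩ :=
    exists_continuous_hasCompactSupport_between_indicators hK hKT
  have h_tail (i : ι) : (μ i).real Tᶜ ≤ (μ i).real Set.univ - ∫ x, φ x ∂μ i := by
    rw [measureReal_compl hT]
    gcongr
    exact integral_le_measureReal_of_le_indicator hT (measure_ne_top _ _) hφ_nonneg hφT
  calc limsup (fun i => (μ i).real Tᶜ) l
      ≤ limsup (fun i => (μ i).real Set.univ - ∫ x, φ x ∂μ i) l :=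
        limsup_le_limsup (.of_forall h_tail)
          (isBoundedUnder_ge_measureReal _).isCoboundedUnder_le
          (hμ.mono_le (.of_forall fun i => sub_le_self _ (integral_nonneg hφ_nonneg)))
    _ = limsup (fun i => (μ i).real Set.univ) l - ∫ x, φ x ∂ν :=
        h.limsup_measureReal_univ_sub_integral hμ hφ hφ_supp
    _ ≤ limsup (fun i => (μ i).real Set.univ) l - ν.real K := by
        gcongr
        exact measureReal_le_integral_of_indicator_le hK_meas
          (hφ.integrable_of_hasCompactSupport hφ_supp) hKφ

theorem le_limsup_measureReal_compl [IsFiniteMeasure ν] (h : VaguelyTendsto μ l ν)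
    (hμ : IsBoundedUnder (· ≤ ·) l fun i => (μ i).real Set.univ)
    (hK : IsCompact K) (hK_meas : MeasurableSet K) :
    limsup (fun i => (μ i).real Set.univ) l - ν.real Set.univ ≤
      limsup (fun i => (μ i).real Kᶜ) l := by
  obtain ⟨φ, hφ, hφ_supp, hφ_nonneg, hKφ, hφ_one⟩ :=
    exists_continuous_hasCompactSupport_between_indicators hK (T := Set.univ) (by simp)
  have h_int (ρ : Measure X) [IsFiniteMeasure ρ] : ∫ x, φ x ∂ρ ≤ ρ.real Set.univ :=
    integral_le_measureReal_of_le_indicator .univ (measure_ne_top _ _) hφ_nonneg hφ_one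
  have h_tail (i : ι) : (μ i).real Set.univ - ∫ x, φ x ∂μ i ≤ (μ i).real Kᶜ := by
    rw [measureReal_compl hK_meas]
    gcongr
    exact measureReal_le_integral_of_indicator_le hK_meas
      (hφ.integrable_of_hasCompactSupport hφ_supp) hKφ
  calc limsup (fun i => (μ i).real Set.univ) l - ν.real Set.univ
      ≤ limsup (fun i => (μ i).real Set.univ) l - ∫ x, φ x ∂ν := by
        gcongr
        exact h_int ν
    _ = limsup (fun i => (μ i).real Set.univ - ∫ x, φ x ∂μ i) l :=
        (h.limsup_measureReal_univ_sub_integral hμ hφ hφ_supp).symm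
    _ ≤ limsup (fun i => (μ i).real Kᶜ) l :=
        limsup_le_limsup (.of_forall h_tail)
          (isBoundedUnder_of ⟨0, fun i => sub_nonneg.2 (h_int (μ i))⟩).isCoboundedUnder_le
          (isBoundedUnder_le_measureReal hμ _)

end VaguelyTendsto

theorem vaguelyTendsto_withDensity_ofReal_iff {ι X : Type*} [TopologicalSpace X]
    [MeasurableSpace X] {l : Filter ι} {μ ν : Measure X} {f : ι → X → ℝ}
    (hf : ∀ i, AEMeasurable (f i) μ) (hf_nonneg : ∀ i, 0 ≤ᵐ[μ] f i) :
    VaguelyTendsto (fun i => μ.withDensity fun x => ENNReal.ofReal (f i x)) l ν ↔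
      ∀ φ : X → ℝ, Continuous φ → HasCompactSupport φ →
        Tendsto (fun i => ∫ x, φ x * f i x ∂μ) l (𝓝 (∫ x, φ x ∂ν)) := by
  simp only [VaguelyTendsto, integral_withDensity_ofReal (hf _) (hf_nonneg _)]

section ProperSpace

variable {ι X : Type*} [PseudoMetricSpace X] [ProperSpace X] [MeasurableSpace X]
  [OpensMeasurableSpace X] {l : Filter ι} [l.NeBot] {μ : ι → Measure X}
  [∀ i, IsFiniteMeasure (μ i)] {ν : Measure X}

namespace VaguelyTendsto

theorem limsup_measureReal_compl_closedBall_le [IsFiniteMeasureOnCompacts ν]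
    (h : VaguelyTendsto μ l ν) (hμ : IsBoundedUnder (· ≤ ·) l fun i => (μ i).real Set.univ)
    (o : X) (R : ℝ) :
    limsup (fun i => (μ i).real (Metric.closedBall o R)ᶜ) l ≤
      limsup (fun i => (μ i).real Set.univ) l - ν.real (Metric.closedBall o (R - 1)) :=
  h.limsup_measureReal_compl_le hμ (isCompact_closedBall o _) measurableSet_closedBall
    measurableSet_closedBall
    ((Metric.closedBall_subset_ball (sub_one_lt R)).trans Metric.ball_subset_interior_closedBall)

theorem isFiniteMeasure [IsFiniteMeasureOnCompacts ν] (h : VaguelyTendsto μ l ν)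
    (hμ : IsBoundedUnder (· ≤ ·) l fun i => (μ i).real Set.univ) : IsFiniteMeasure ν := by
  rcases isEmpty_or_nonempty X with hX | ⟨⟨o⟩⟩
  · infer_instance
  have h_ball (R : ℝ) : ν (Metric.closedBall o R) ≤
      ENNReal.ofReal (limsup (fun i => (μ i).real Set.univ) l) := by
    rw [ENNReal.le_ofReal_iff_toReal_le (isCompact_closedBall o R).measure_ne_top
      (limsup_measureReal_nonneg hμ _), ← measureReal_def]
    have h_le := h.limsup_measureReal_compl_closedBall_le hμ o (R + 1)
    rw [add_sub_cancel_right] at h_le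
    linarith [limsup_measureReal_nonneg hμ (Metric.closedBall o (R + 1))ᶜ]
  exact ⟨(le_of_tendsto' (tendsto_measure_closedBall_atTop ν o) h_ball).trans_lt
    ENNReal.ofReal_lt_top⟩

theorem tendsto_limsup_measureReal_compl_closedBall [IsFiniteMeasure ν]
    (h : VaguelyTendsto μ l ν)
    (hμ : IsBoundedUnder (· ≤ ·) l fun i => (μ i).real Set.univ) (o : X) :
    Tendsto (fun R : ℝ => limsup (fun i => (μ i).real (Metric.closedBall o R)ᶜ) l) atTop
      (𝓝 (limsup (fun i => (μ i).real Set.univ) l - ν.real Set.univ)) := by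
  have h_balls : Tendsto (fun R : ℝ => ν.real (Metric.closedBall o (R - 1))) atTop
      (𝓝 (ν.real Set.univ)) :=
    (ENNReal.tendsto_toReal (measure_ne_top ν _)).comp <|
      (tendsto_measure_closedBall_atTop ν o).comp (tendsto_atTop_add_const_right _ _ tendsto_id)
  exact tendsto_of_tendsto_of_tendsto_of_le_of_le tendsto_const_nhds
    (tendsto_const_nhds.sub h_balls)
    (fun R => h.le_limsup_measureReal_compl hμ (isCompact_closedBall o R) measurableSet_closedBall)
    (h.limsup_measureReal_compl_closedBall_le hμ o)

end VaguelyTendsto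

theorem mass_decomposition_at_infinity_general [IsFiniteMeasureOnCompacts ν]
    (h : VaguelyTendsto μ l ν)
    (hμ : IsBoundedUnder (· ≤ ·) l fun i => (μ i).real Set.univ) (o : X) :
    IsFiniteMeasure ν ∧ ∃ νinf : ℝ,
      (Antitone fun R : ℝ => limsup (fun i => (μ i).real (Metric.closedBall o R)ᶜ) l) ∧
      (∀ R : ℝ, 0 ≤ limsup (fun i => (μ i).real (Metric.closedBall o R)ᶜ) l) ∧
      Tendsto (fun R : ℝ => limsup (fun i => (μ i).real (Metric.closedBall o R)ᶜ) l) atTop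
        (𝓝 νinf) ∧
      limsup (fun i => (μ i).real Set.univ) l = ν.real Set.univ + νinf := by
  have hν : IsFiniteMeasure ν := h.isFiniteMeasure hμ
  refine ⟨hν, _, fun R S hRS => ?_, fun R => limsup_measureReal_nonneg hμ _,
    h.tendsto_limsup_measureReal_compl_closedBall hμ o, (add_sub_cancel _ _).symm⟩
  exact monotone_limsup_measureReal hμ
    (Set.compl_subset_compl.2 (Metric.closedBall_subset_closedBall hRS))

end ProperSpace

/-- Mass decomposition at infinity (core of Theorem 2.2). -/
theorem mass_decomposition_at_infinity
    {N : ℕ} (hN : 1 ≤ N)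
    (f : ℕ → EuclideanSpace ℝ (Fin N) → ℝ)
    (hf_meas : ∀ n, Measurable (f n))
    (hf_nonneg : ∀ n x, 0 ≤ f n x)
    (hf_int : ∀ n, Integrable (f n) volume)
    (M : ℝ) (hf_sup : ∀ n, ∫ x, f n x ≤ M)
    (ν : Measure (EuclideanSpace ℝ (Fin N))) [IsFiniteMeasure ν]
    (hweak : ∀ φ : EuclideanSpace ℝ (Fin N) → ℝ, Continuous φ → HasCompactSupport φ →
      Tendsto (fun n => ∫ x, φ x * f n x) atTop (𝓝 (∫ x, φ x ∂ν))) :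
    ∃ νinf : ℝ,
      (Antitone fun R : ℝ =>
          limsup (fun n => ∫ x in {x : EuclideanSpace ℝ (Fin N) | R < ‖x‖}, f n x) atTop) ∧
      (∀ R : ℝ,
          0 ≤ limsup (fun n => ∫ x in {x : EuclideanSpace ℝ (Fin N) | R < ‖x‖}, f n x) atTop) ∧
      Tendsto
        (fun R : ℝ =>
          limsup (fun n => ∫ x in {x : EuclideanSpace ℝ (Fin N) | R < ‖x‖}, f n x) atTop)
        atTop (𝓝 νinf) ∧
      limsup (fun n => ∫ x, f n x) atTop = (ν Set.univ).toReal + νinf := by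
  have hf_ae (n : ℕ) : 0 ≤ᵐ[volume] f n := .of_forall (hf_nonneg n)
  have h_finite (n : ℕ) : IsFiniteMeasure (volume.withDensity fun x => ENNReal.ofReal (f n x)) :=
    isFiniteMeasure_withDensity_ofReal (hf_int n).2
  have h_tail (R : ℝ) :
      {x : EuclideanSpace ℝ (Fin N) | R < ‖x‖} = (Metric.closedBall 0 R)ᶜ := by
    ext x
    simp
  have h_mass (n : ℕ) :
      (volume.withDensity fun x => ENNReal.ofReal (f n x)).real Set.univ = ∫ x, f n x := by
    rw [measureReal_withDensity_ofReal (hf_int n) (hf_ae n) .univ, setIntegral_univ]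
  have h_vague := (vaguelyTendsto_withDensity_ofReal_iff
    (fun n => (hf_meas n).aemeasurable) hf_ae).2 hweak
  have h_bdd := isBoundedUnder_of (f := atTop) ⟨M, fun n => (h_mass n).trans_le (hf_sup n)⟩
  simpa only [h_tail, h_mass, ← measureReal_def,
    measureReal_withDensity_ofReal (hf_int _) (hf_ae _) measurableSet_closedBall.compl] using
    (mass_decomposition_at_infinity_general h_vague h_bdd 0).2
end

section
/- Generalized Riesz convergence theorem with variable exponent (proved at the end of Lemma 3.1): let N ≥ 1 and let r : ℝ^N → ℝ be measurable with 1 ≤ r(x) ≤ r⁺ < ∞ for a.e. x. Let (v_n) and v be measurable real-valued functions on ℝ^N such that v_n → v almost everywhere, ∫_{ℝ^N} |v_n(x)|^{r(x)} dx < ∞ for all n, ∫_{ℝ^N} |v(x)|^{r(x)} dx < ∞, and ∫_{ℝ^N} |v_n(x)|^{r(x)} dx → ∫_{ℝ^N} |v(x)|^{r(x)} dx as n → ∞. Then ∫_{ℝ^N} |v_n(x) − v(x)|^{r(x)} dx → 0 as n → ∞. -/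
open MeasureTheory Filter Topology

/-!
The integrand `‖vₙ - v‖ ^ r` lies below `Gₙ = 2 ^ r⁺ * (‖vₙ‖ ^ r + ‖v‖ ^ r)`. These bounds depend on
`n`, but both they and their integrals converge, and truncating at the limit of `Gₙ` reduces this
situation to a fixed dominating function (Pratt's lemma).
-/

theorem norm_sub_rpow_le_two_rpow_mul {E : Type*} [SeminormedAddGroup E] (a b : E) {p : ℝ}
    (hp : 0 ≤ p) : ‖a - b‖ ^ p ≤ 2 ^ p * (‖a‖ ^ p + ‖b‖ ^ p) := by
  have h_max : ‖a - b‖ ≤ 2 * max ‖a‖ ‖b‖ := by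
    linarith [norm_sub_le a b, le_max_left ‖a‖ ‖b‖, le_max_right ‖a‖ ‖b‖]
  calc ‖a - b‖ ^ p
    _ ≤ (2 * max ‖a‖ ‖b‖) ^ p := by gcongr
    _ = 2 ^ p * max (‖a‖ ^ p) (‖b‖ ^ p) := by
      rw [Real.mul_rpow zero_le_two (by positivity),
        Real.rpow_max (norm_nonneg a) (norm_nonneg b) hp]
    _ ≤ 2 ^ p * (‖a‖ ^ p + ‖b‖ ^ p) := by
      gcongr
      exact max_le_add_of_nonneg (by positivity) (by positivity)

section

variable {α ι E : Type*} [MeasurableSpace α] {μ : Measure α} [NormedAddCommGroup E]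
  {l : Filter ι} [l.IsCountablyGenerated]

theorem tendsto_integral_zero_of_norm_le_of_tendsto_integral [NormedSpace ℝ E] {F : ι → α → E}
    {G : ι → α → ℝ} {g : α → ℝ}
    (hF_meas : ∀ᶠ i in l, AEStronglyMeasurable (F i) μ)
    (hG_int : ∀ᶠ i in l, Integrable (G i) μ) (hg_int : Integrable g μ)
    (h_le : ∀ᶠ i in l, ∀ᵐ x ∂μ, ‖F i x‖ ≤ G i x)
    (hF_lim : ∀ᵐ x ∂μ, Tendsto (fun i => F i x) l (𝓝 0))
    (hG_lim : ∀ᵐ x ∂μ, Tendsto (fun i => G i x) l (𝓝 (g x)))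
    (hG_integral : Tendsto (fun i => ∫ x, G i x ∂μ) l (𝓝 (∫ x, g x ∂μ))) :
    Tendsto (fun i => ∫ x, F i x ∂μ) l (𝓝 0) := by
  -- `‖F i‖ ≤ G i + H i`, since `t ↦ min t |g x|` is 1-Lipschitz.
  let H : ι → α → ℝ := fun i x => min ‖F i x‖ |g x| - min (G i x) |g x|
  have hH_meas : ∀ᶠ i in l, AEStronglyMeasurable (H i) μ := by
    filter_upwards [hF_meas, hG_int] with i hF hG
    exact (hF.norm.inf hg_int.abs.aestronglyMeasurable).sub
      (hG.inf hg_int.abs).aestronglyMeasurable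
  have hH_le : ∀ᶠ i in l, ∀ᵐ x ∂μ, ‖H i x‖ ≤ |g x| := by
    filter_upwards [h_le] with i hi
    filter_upwards [hi] with x hx
    have hG_nonneg : 0 ≤ G i x := (norm_nonneg _).trans hx
    exact abs_sub_le_of_nonneg_of_le (le_min (norm_nonneg _) (abs_nonneg _)) (min_le_right _ _)
      (le_min hG_nonneg (abs_nonneg _)) (min_le_right _ _)
  have hH_lim : ∀ᵐ x ∂μ, Tendsto (fun i => H i x) l (𝓝 (-g x)) := by
    filter_upwards [hF_lim, hG_lim] with x hF hG
    simpa [le_abs_self] using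
      (hF.norm.min (tendsto_const_nhds (x := |g x|))).sub
        (hG.min (tendsto_const_nhds (x := |g x|)))
  have hH_integral : Tendsto (fun i => ∫ x, H i x ∂μ) l (𝓝 (-∫ x, g x ∂μ)) := by
    simpa only [integral_neg] using
      tendsto_integral_filter_of_dominated_convergence _ hH_meas hH_le hg_int.abs hH_lim
  have h_sum : Tendsto (fun i => (∫ x, G i x ∂μ) + ∫ x, H i x ∂μ) l (𝓝 0) := by
    simpa only [add_neg_cancel] using hG_integral.add hH_integral
  refine squeeze_zero_norm' ?_ h_sum
  filter_upwards [hG_int, h_le, hH_meas, hH_le] with i hG hFG hH_meas hH_le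
  have hH_int : Integrable (H i) μ := hg_int.abs.mono' hH_meas hH_le
  rw [← integral_add hG hH_int]
  refine norm_integral_le_of_norm_le (hG.add hH_int) ?_
  filter_upwards [hFG] with x hx
  have h_truncate : min (G i x) |g x| - min ‖F i x‖ |g x| ≤ G i x - ‖F i x‖ := by grind
  linarith

theorem riesz_convergence_variable_exponent_general
    {r : α → ℝ} (hr_meas : AEMeasurable r μ) {rp : ℝ} (hr : ∀ᵐ x ∂μ, 0 < r x ∧ r x ≤ rp)
    {v : ι → α → E} {vlim : α → E}
    (hv_meas : ∀ᶠ i in l, AEStronglyMeasurable (v i) μ) (hvlim_meas : AEStronglyMeasurable vlim μ)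
    (hae : ∀ᵐ x ∂μ, Tendsto (fun i => v i x) l (𝓝 (vlim x)))
    (hv_int : ∀ᶠ i in l, Integrable (fun x => ‖v i x‖ ^ r x) μ)
    (hvlim_int : Integrable (fun x => ‖vlim x‖ ^ r x) μ)
    (hconv : Tendsto (fun i => ∫ x, ‖v i x‖ ^ r x ∂μ) l (𝓝 (∫ x, ‖vlim x‖ ^ r x ∂μ))) :
    Tendsto (fun i => ∫ x, ‖v i x - vlim x‖ ^ r x ∂μ) l (𝓝 0) := by
  let G : (α → E) → α → ℝ := fun w x => 2 ^ rp * (‖w x‖ ^ r x + ‖vlim x‖ ^ r x)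
  have hG_int {w : α → E} (hw : Integrable (fun x => ‖w x‖ ^ r x) μ) : Integrable (G w) μ :=
    (hw.add hvlim_int).const_mul _
  have hG_integral {w : α → E} (hw : Integrable (fun x => ‖w x‖ ^ r x) μ) :
      ∫ x, G w x ∂μ = 2 ^ rp * ((∫ x, ‖w x‖ ^ r x ∂μ) + ∫ x, ‖vlim x‖ ^ r x ∂μ) := by
    rw [integral_const_mul, integral_add hw hvlim_int]
  have h_meas : ∀ᶠ i in l, AEStronglyMeasurable (fun x => ‖v i x - vlim x‖ ^ r x) μ :=
    hv_meas.mono fun i hi =>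
      ((hi.sub hvlim_meas).norm.aemeasurable.pow hr_meas).aestronglyMeasurable
  have h_le (i : ι) : ∀ᵐ x ∂μ, ‖‖v i x - vlim x‖ ^ r x‖ ≤ G (v i) x := by
    filter_upwards [hr] with x ⟨hr_pos, hr_le⟩
    rw [Real.norm_of_nonneg (by positivity)]
    refine (norm_sub_rpow_le_two_rpow_mul _ _ hr_pos.le).trans ?_
    exact mul_le_mul_of_nonneg_right (Real.rpow_le_rpow_of_exponent_le one_le_two hr_le)
      (by positivity)
  have h_lim : ∀ᵐ x ∂μ, Tendsto (fun i => ‖v i x - vlim x‖ ^ r x) l (𝓝 0) := by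
    filter_upwards [hae, hr] with x hx ⟨hr_pos, _⟩
    simpa only [sub_self, norm_zero, Real.zero_rpow hr_pos.ne'] using
      (hx.sub_const (vlim x)).norm.rpow_const (.inr hr_pos.le)
  have hG_lim : ∀ᵐ x ∂μ, Tendsto (fun i => G (v i) x) l (𝓝 (G vlim x)) := by
    filter_upwards [hae, hr] with x hx ⟨hr_pos, _⟩
    exact ((hx.norm.rpow_const (.inr hr_pos.le)).add_const _).const_mul _
  have hG_conv : Tendsto (fun i => ∫ x, G (v i) x ∂μ) l (𝓝 (∫ x, G vlim x ∂μ)) := by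
    rw [hG_integral hvlim_int]
    exact ((hconv.add_const _).const_mul _).congr' (hv_int.mono fun i hi => (hG_integral hi).symm)
  exact tendsto_integral_zero_of_norm_le_of_tendsto_integral h_meas
    (hv_int.mono fun i hi => hG_int hi) (hG_int hvlim_int) (.of_forall h_le) h_lim hG_lim hG_conv

end

/-- Generalized Riesz convergence theorem with variable exponent
(proved at the end of Lemma 3.1). -/
theorem riesz_convergence_variable_exponent
    {N : ℕ} (hN : 1 ≤ N)
    (r : EuclideanSpace ℝ (Fin N) → ℝ) (hr_meas : Measurable r)
    (rp : ℝ) (hr_ae : ∀ᵐ x ∂volume, 1 ≤ r x ∧ r x ≤ rp)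
    (v : ℕ → EuclideanSpace ℝ (Fin N) → ℝ)
    (vlim : EuclideanSpace ℝ (Fin N) → ℝ)
    (hv_meas : ∀ n, Measurable (v n)) (hvlim_meas : Measurable vlim)
    (hae : ∀ᵐ x ∂volume, Tendsto (fun n => v n x) atTop (𝓝 (vlim x)))
    (hv_int : ∀ n, Integrable (fun x => |v n x| ^ (r x)) volume)
    (hvlim_int : Integrable (fun x => |vlim x| ^ (r x)) volume)
    (hconv : Tendsto (fun n => ∫ x, |v n x| ^ (r x)) atTop
      (𝓝 (∫ x, |vlim x| ^ (r x)))) :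
    Tendsto (fun n => ∫ x, |v n x - vlim x| ^ (r x)) atTop (𝓝 0) :=
  riesz_convergence_variable_exponent_general hr_meas.aemeasurable
    (hr_ae.mono fun _ hx => ⟨one_pos.trans_le hx.1, hx.2⟩)
    (.of_forall fun n => (hv_meas n).aestronglyMeasurable) hvlim_meas.aestronglyMeasurable
    hae (.of_forall hv_int) hvlim_int hconv
end

section
/- Strong monotonicity inequality for the p-Laplacian map, case p ≥ 2 (inequality (3.15), first case, with a_i ≡ 1): for every real number p ≥ 2 there exists a constant c_p > 0 such that for every N ≥ 1 and all vectors η, ξ ∈ ℝ^N, |η − ξ|^p ≤ c_p ⟨|η|^{p−2}η − |ξ|^{p−2}ξ, η − ξ⟩, where ⟨·,·⟩ is the Euclidean inner product, |·| the Euclidean norm, and |x|^{p−2}x is interpreted as 0 when x = 0. -/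
open scoped InnerProductSpace

/-! Polarization writes `2⟪s • x - t • y, x - y⟫` as `(s + t) * ‖x - y‖ ^ 2` plus the term
`(s - t) * (‖x‖ ^ 2 - ‖y‖ ^ 2)`, which is nonnegative when the weights `s`, `t` are ordered like the
norms of `x`, `y`. For `s = ‖x‖ ^ (p - 2)` and `t = ‖y‖ ^ (p - 2)` the triangle inequality bounds
`‖x - y‖ ^ (p - 2)` by a multiple of `s + t`. -/

lemma add_rpow_le_two_rpow_mul_rpow_add_rpow {a b q : ℝ} (ha : 0 ≤ a) (hb : 0 ≤ b) (hq : 0 ≤ q) :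
    (a + b) ^ q ≤ 2 ^ q * (a ^ q + b ^ q) := by
  lift a to NNReal using ha
  lift b to NNReal using hb
  have henn := ENNReal.add_rpow_le_two_rpow_mul_rpow_add_rpow a b hq
  simp only [← ENNReal.coe_add, ← ENNReal.coe_rpow_of_nonneg _ hq, ← ENNReal.coe_two,
    ← ENNReal.coe_mul, ENNReal.coe_le_coe] at henn
  exact_mod_cast henn

section InnerProductSpace

variable {E : Type*} [SeminormedAddCommGroup E] [InnerProductSpace ℝ E]

lemma two_mul_inner_smul_sub_smul_sub (s t : ℝ) (x y : E) :
    2 * ⟪s • x - t • y, x - y⟫_ℝ =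
      (s + t) * ‖x - y‖ ^ 2 + (s - t) * (‖x‖ ^ 2 - ‖y‖ ^ 2) := by
  rw [norm_sub_sq_real]
  simp only [inner_sub_left, inner_sub_right, real_inner_smul_left,
    real_inner_self_eq_norm_sq, real_inner_comm x y]
  ring

lemma add_mul_norm_sub_sq_le_two_mul_inner_of_monotoneOn {w : ℝ → ℝ}
    (hw : MonotoneOn w (Set.Ici 0)) (x y : E) :
    (w ‖x‖ + w ‖y‖) * ‖x - y‖ ^ 2 ≤ 2 * ⟪w ‖x‖ • x - w ‖y‖ • y, x - y⟫_ℝ := by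
  have hsq : MonotoneOn (fun r : ℝ ↦ r ^ 2) (Set.Ici 0) := pow_left_monotoneOn
  have hmonovary : 0 ≤ (w ‖x‖ - w ‖y‖) * (‖x‖ ^ 2 - ‖y‖ ^ 2) :=
    (hw.monovaryOn hsq).sub_mul_sub_nonneg (norm_nonneg y) (norm_nonneg x)
  rw [two_mul_inner_smul_sub_smul_sub]
  exact le_add_of_nonneg_right hmonovary

theorem pLaplacian_strong_monotonicity_ge_two_general {p : ℝ} (hp : 2 ≤ p) (η ξ : E) :
    ‖η - ξ‖ ^ p ≤
      2 ^ (p - 1) * ⟪(‖η‖ ^ (p - 2)) • η - (‖ξ‖ ^ (p - 2)) • ξ, η - ξ⟫_ℝ := by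
  have hq : 0 ≤ p - 2 := sub_nonneg.2 hp
  calc ‖η - ξ‖ ^ p = ‖η - ξ‖ ^ (p - 2) * ‖η - ξ‖ ^ 2 := by
        rw [← Real.rpow_two, ← Real.rpow_add_of_nonneg (norm_nonneg _) hq zero_le_two,
          sub_add_cancel]
    _ ≤ (‖η‖ + ‖ξ‖) ^ (p - 2) * ‖η - ξ‖ ^ 2 := by
        gcongr
        exact norm_sub_le η ξ
    _ ≤ 2 ^ (p - 2) * (‖η‖ ^ (p - 2) + ‖ξ‖ ^ (p - 2)) * ‖η - ξ‖ ^ 2 := by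
        gcongr
        exact add_rpow_le_two_rpow_mul_rpow_add_rpow (norm_nonneg η) (norm_nonneg ξ) hq
    _ = 2 ^ (p - 2) * ((‖η‖ ^ (p - 2) + ‖ξ‖ ^ (p - 2)) * ‖η - ξ‖ ^ 2) := mul_assoc _ _ _
    _ ≤ 2 ^ (p - 2) * (2 * ⟪(‖η‖ ^ (p - 2)) • η - (‖ξ‖ ^ (p - 2)) • ξ, η - ξ⟫_ℝ) := by
        gcongr 2 ^ (p - 2) * ?_
        exact add_mul_norm_sub_sq_le_two_mul_inner_of_monotoneOn
          (Real.monotoneOn_rpow_Ici_of_exponent_nonneg hq) η ξ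
    _ = 2 ^ (p - 1) * ⟪(‖η‖ ^ (p - 2)) • η - (‖ξ‖ ^ (p - 2)) • ξ, η - ξ⟫_ℝ := by
        rw [← mul_assoc, ← Real.rpow_add_one two_ne_zero, show p - 2 + 1 = p - 1 by ring]

end InnerProductSpace

/-- Strong monotonicity inequality for the p-Laplacian map, case `p ≥ 2`
(inequality (3.15), first case, with `a_i ≡ 1`). -/
theorem pLaplacian_strong_monotonicity_ge_two
    (p : ℝ) (hp : 2 ≤ p) :
    ∃ c : ℝ, 0 < c ∧
      ∀ (N : ℕ), 1 ≤ N → ∀ η ξ : EuclideanSpace ℝ (Fin N),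
        ‖η - ξ‖ ^ p ≤
          c * ⟪(‖η‖ ^ (p - 2)) • η - (‖ξ‖ ^ (p - 2)) • ξ, η - ξ⟫_ℝ :=
  ⟨2 ^ (p - 1), by positivity, fun _ _ ↦ pLaplacian_strong_monotonicity_ge_two_general hp⟩
end

section
/- Strong monotonicity inequality for the p-Laplacian map, case 1 < p < 2 (inequality (3.15), second case, with a_i ≡ 1): for every real number p with 1 < p < 2 there exists a constant c_p > 0 such that for every N ≥ 1 and all vectors η, ξ ∈ ℝ^N not both zero, |η − ξ|² ≤ c_p (|η| + |ξ|)^{2−p} ⟨|η|^{p−2}η − |ξ|^{p−2}ξ, η − ξ⟩, where ⟨·,·⟩ is the Euclidean inner product, |·| the Euclidean norm, and |x|^{p−2}x is interpreted as 0 when x = 0. -/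
open scoped InnerProductSpace

/-!
Splitting into radial and angular parts, for all scalars `α`, `β`,
`⟪α η - β ξ, η - ξ⟫ = (α|η| - β|ξ|)(|η| - |ξ|) + (α + β)(|η||ξ| - ⟪η, ξ⟫)`,
and `α = β = 1` gives `|η - ξ|²`. For `α = |η|^(p-2)`, `β = |ξ|^(p-2)` the two parts are compared
separately. The radial part is controlled by concavity of `t ↦ t^(p-1)`; for the angular part,
which is nonnegative by Cauchy-Schwarz and vanishes if `η = 0` or `ξ = 0`, both `α` and `β` are
otherwise at least `(|η| + |ξ|)^(p-2)`.
The resulting constant is `1 / (p - 1)`.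
-/

section Scalar

variable {p r s x y : ℝ}

lemma mul_rpow_sub_one_mul_sub_le_rpow_sub_rpow (hr₀ : 0 ≤ r) (hr₁ : r ≤ 1) (hx : 0 < x)
    (hy : 0 ≤ y) : r * x ^ (r - 1) * (x - y) ≤ x ^ r - y ^ r := by
  have bernoulli : (y / x) ^ r ≤ 1 + r * (y / x - 1) := by
    have h := rpow_one_add_le_one_add_mul_self (s := y / x - 1)
      (by linarith [div_nonneg hy hx.le]) hr₀ hr₁
    rwa [add_sub_cancel] at h
  rw [Real.div_rpow hy hx.le, div_le_iff₀ (Real.rpow_pos_of_pos hx r)] at bernoulli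
  calc r * x ^ (r - 1) * (x - y) = x ^ r - (1 + r * (y / x - 1)) * x ^ r := by
        rw [Real.rpow_sub_one hx.ne']
        field_simp
        ring
    _ ≤ x ^ r - y ^ r := by gcongr

lemma one_le_rpow_mul_rpow_neg (hx : 0 < x) (hxy : x ≤ y) (hs : 0 ≤ s) :
    1 ≤ y ^ s * x ^ (-s) := by
  rw [Real.rpow_neg hx.le, ← div_eq_mul_inv, one_le_div (Real.rpow_pos_of_pos hx s)]
  exact Real.rpow_le_rpow hx.le hxy hs

lemma rpow_sub_two_mul_self (hx : x ≠ 0) : x ^ (p - 2) * x = x ^ (p - 1) := by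
  rw [← Real.rpow_add_one hx]
  ring_nf

/-- Only an inequality, because for `p = 1` and `x = 0` the right-hand side is `0 ^ 0 = 1`. -/
lemma rpow_sub_two_mul_self_le (hx : 0 ≤ x) : x ^ (p - 2) * x ≤ x ^ (p - 1) := by
  rcases hx.eq_or_lt with rfl | hx
  · simpa only [mul_zero] using Real.rpow_nonneg le_rfl (p - 1)
  · exact (rpow_sub_two_mul_self hx.ne').le

lemma mul_sub_sq_le_add_rpow_mul (hp₁ : 1 ≤ p) (hp₂ : p ≤ 2) (hx : 0 ≤ x) (hy : 0 ≤ y) :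
    (p - 1) * (x - y) ^ 2 ≤
      (x + y) ^ (2 - p) * ((x ^ (p - 2) * x - y ^ (p - 2) * y) * (x - y)) := by
  wlog hyx : y ≤ x generalizing x y
  · convert this hy hx (le_of_not_ge hyx) using 1
    · ring
    · rw [add_comm y x]
      ring
  rcases hx.eq_or_lt with rfl | hx
  · simp [le_antisymm hyx hy]
  have weight : 1 ≤ (x + y) ^ (2 - p) * x ^ (p - 2) := by
    simpa only [neg_sub] using
      one_le_rpow_mul_rpow_neg hx (le_add_of_nonneg_right hy) (sub_nonneg.2 hp₂)
  have tangent : (p - 1) * x ^ (p - 2) * (x - y) ≤ x ^ (p - 2) * x - y ^ (p - 2) * y := by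
    calc (p - 1) * x ^ (p - 2) * (x - y) = (p - 1) * x ^ (p - 1 - 1) * (x - y) := by ring_nf
      _ ≤ x ^ (p - 1) - y ^ (p - 1) :=
        mul_rpow_sub_one_mul_sub_le_rpow_sub_rpow (by linarith) (by linarith) hx hy
      _ ≤ x ^ (p - 2) * x - y ^ (p - 2) * y :=
        sub_le_sub (rpow_sub_two_mul_self hx.ne').ge (rpow_sub_two_mul_self_le hy)
  calc (p - 1) * (x - y) ^ 2
      ≤ (x + y) ^ (2 - p) * x ^ (p - 2) * ((p - 1) * (x - y) ^ 2) :=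
        le_mul_of_one_le_left (mul_nonneg (sub_nonneg.2 hp₁) (sq_nonneg _)) weight
    _ = (x + y) ^ (2 - p) * ((p - 1) * x ^ (p - 2) * (x - y) * (x - y)) := by ring
    _ ≤ (x + y) ^ (2 - p) * ((x ^ (p - 2) * x - y ^ (p - 2) * y) * (x - y)) := by gcongr

end Scalar

section InnerProductSpace

variable {E : Type*} [NormedAddCommGroup E] [InnerProductSpace ℝ E] {p : ℝ}

lemma inner_smul_sub_smul_sub (α β : ℝ) (η ξ : E) :
    ⟪α • η - β • ξ, η - ξ⟫_ℝ =
      (α * ‖η‖ - β * ‖ξ‖) * (‖η‖ - ‖ξ‖) + (α + β) * (‖η‖ * ‖ξ‖ - ⟪η, ξ⟫_ℝ) := by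
  simp only [inner_sub_left, inner_sub_right, real_inner_smul_left,
    real_inner_self_eq_norm_sq, real_inner_comm η ξ]
  ring

lemma norm_sub_sq_eq_sub_sq_add (η ξ : E) :
    ‖η - ξ‖ ^ 2 = (‖η‖ - ‖ξ‖) ^ 2 + 2 * (‖η‖ * ‖ξ‖ - ⟪η, ξ⟫_ℝ) := by
  rw [norm_sub_sq_real]
  ring

lemma two_mul_norm_mul_norm_sub_inner_le (hp : p ≤ 2) (η ξ : E) :
    2 * (‖η‖ * ‖ξ‖ - ⟪η, ξ⟫_ℝ) ≤
      (‖η‖ + ‖ξ‖) ^ (2 - p) *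
        ((‖η‖ ^ (p - 2) + ‖ξ‖ ^ (p - 2)) * (‖η‖ * ‖ξ‖ - ⟪η, ξ⟫_ℝ)) := by
  rcases eq_or_ne η 0 with rfl | hη
  · simp
  rcases eq_or_ne ξ 0 with rfl | hξ
  · simp
  have weight_η : 1 ≤ (‖η‖ + ‖ξ‖) ^ (2 - p) * ‖η‖ ^ (p - 2) := by
    simpa only [neg_sub] using one_le_rpow_mul_rpow_neg (norm_pos_iff.2 hη)
      (le_add_of_nonneg_right (norm_nonneg ξ)) (sub_nonneg.2 hp)
  have weight_ξ : 1 ≤ (‖η‖ + ‖ξ‖) ^ (2 - p) * ‖ξ‖ ^ (p - 2) := by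
    simpa only [neg_sub] using one_le_rpow_mul_rpow_neg (norm_pos_iff.2 hξ)
      (le_add_of_nonneg_left (norm_nonneg η)) (sub_nonneg.2 hp)
  rw [← mul_assoc]
  exact mul_le_mul_of_nonneg_right (by linarith) (sub_nonneg.2 (real_inner_le_norm η ξ))

theorem pLaplacian_strong_monotonicity_lt_two_general (hp₁ : 1 ≤ p) (hp₂ : p ≤ 2) (η ξ : E) :
    (p - 1) * ‖η - ξ‖ ^ 2 ≤
      (‖η‖ + ‖ξ‖) ^ (2 - p) *
        ⟪(‖η‖ ^ (p - 2)) • η - (‖ξ‖ ^ (p - 2)) • ξ, η - ξ⟫_ℝ := by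
  have radial := mul_sub_sq_le_add_rpow_mul hp₁ hp₂ (norm_nonneg η) (norm_nonneg ξ)
  have angular := two_mul_norm_mul_norm_sub_inner_le hp₂ η ξ
  have cauchy_schwarz : 0 ≤ 2 * (‖η‖ * ‖ξ‖ - ⟪η, ξ⟫_ℝ) :=
    mul_nonneg zero_le_two (sub_nonneg.2 (real_inner_le_norm η ξ))
  calc (p - 1) * ‖η - ξ‖ ^ 2
      = (p - 1) * (‖η‖ - ‖ξ‖) ^ 2 + (p - 1) * (2 * (‖η‖ * ‖ξ‖ - ⟪η, ξ⟫_ℝ)) := by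
        rw [norm_sub_sq_eq_sub_sq_add, mul_add]
    _ ≤ (p - 1) * (‖η‖ - ‖ξ‖) ^ 2 + 2 * (‖η‖ * ‖ξ‖ - ⟪η, ξ⟫_ℝ) :=
        add_le_add le_rfl (mul_le_of_le_one_left cauchy_schwarz (by linarith))
    _ ≤ _ := by
        rw [inner_smul_sub_smul_sub, mul_add]
        exact add_le_add radial angular

end InnerProductSpace

/-- Strong monotonicity inequality for the p-Laplacian map, case `1 < p < 2`
(inequality (3.15), second case, with `a_i ≡ 1`).
Note that for `x = 0` the vector `(‖x‖ ^ (p - 2)) • x` equals `0`, in accordance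
with the convention `|0|^{p-2}·0 = 0`. -/
theorem pLaplacian_strong_monotonicity_lt_two
    (p : ℝ) (hp₁ : 1 < p) (hp₂ : p < 2) :
    ∃ c : ℝ, 0 < c ∧
      ∀ (N : ℕ), 1 ≤ N → ∀ η ξ : EuclideanSpace ℝ (Fin N), (η ≠ 0 ∨ ξ ≠ 0) →
        ‖η - ξ‖ ^ 2 ≤
          c * (‖η‖ + ‖ξ‖) ^ (2 - p) *
            ⟪(‖η‖ ^ (p - 2)) • η - (‖ξ‖ ^ (p - 2)) • ξ, η - ξ⟫_ℝ := by
  refine ⟨(p - 1)⁻¹, inv_pos.2 (sub_pos.2 hp₁), fun N _ η ξ _ ↦ ?_⟩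
  rw [mul_assoc, le_inv_mul_iff₀ (sub_pos.2 hp₁)]
  exact pLaplacian_strong_monotonicity_lt_two_general hp₁.le hp₂.le η ξ
end

section
/- Verification of condition (H_{a₃}) for the generalized capillary operator (Example III): let p > 1 be a real number, let a(s) := 1 + s/√(1+s²) for s ≥ 0, and define g(t) := a(t^p) t^{p−2} for t > 0. Then g is differentiable on (0,∞) and for every t > 0 one has g(t) ≥ t^{p−2} and g(t) + t·g'(t) ≥ (p−1) t^{p−2}; consequently min{g(t), g(t) + t·g'(t)} ≥ c·t^{p−2} for all t > 0 with c := min{1, p−1} > 0. -/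
/-!
The quantity `g t + t * g' t` is the derivative of the flux `t * g t`. For `g t = a (t ^ p) * t ^ q`
it equals `(p * t ^ p * a' (t ^ p) + (q + 1) * a (t ^ p)) * t ^ q`, so when `p ≥ 0` and `a` is
nondecreasing its first summand can be dropped and a lower bound on `a` suffices. The
capillary coefficient is `1 + sin (arctan s)`, which is increasing and at least `1` for `s ≥ 0`.
-/

section CompRpowMulRpow

variable {a : ℝ → ℝ} {a' p q t : ℝ}

theorem hasDerivAt_comp_rpow_mul_rpow (ha : HasDerivAt a a' (t ^ p)) (ht : t ≠ 0) :
    HasDerivAt (fun x ↦ a (x ^ p) * x ^ q)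
      ((p * t ^ p * a' + q * a (t ^ p)) * t ^ (q - 1)) t := by
  have hp := Real.hasDerivAt_rpow_const (p := p) (Or.inl ht)
  have hq := Real.hasDerivAt_rpow_const (p := q) (Or.inl ht)
  refine ((ha.comp t hp).mul hq).congr_deriv ?_
  rw [Function.comp_apply, Real.rpow_sub_one ht, Real.rpow_sub_one ht]
  ring

theorem add_mul_deriv_comp_rpow_mul_rpow (ha : HasDerivAt a a' (t ^ p)) (ht : t ≠ 0) :
    a (t ^ p) * t ^ q + t * deriv (fun x ↦ a (x ^ p) * x ^ q) t =
      (p * t ^ p * a' + (q + 1) * a (t ^ p)) * t ^ q := by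
  rw [(hasDerivAt_comp_rpow_mul_rpow ha ht).deriv, Real.rpow_sub_one ht]
  field_simp
  ring

theorem le_add_mul_deriv_comp_rpow_mul_rpow {m : ℝ} (ha : DifferentiableAt ℝ a (t ^ p))
    (ha' : 0 ≤ deriv a (t ^ p)) (hm : m ≤ a (t ^ p)) (hp : 0 ≤ p) (hq : 0 ≤ q + 1) (ht : 0 < t) :
    (q + 1) * m * t ^ q ≤ a (t ^ p) * t ^ q + t * deriv (fun x ↦ a (x ^ p) * x ^ q) t := by
  rw [add_mul_deriv_comp_rpow_mul_rpow ha.hasDerivAt ht.ne']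
  gcongr
  calc (q + 1) * m ≤ (q + 1) * a (t ^ p) := by gcongr
    _ ≤ p * t ^ p * deriv a (t ^ p) + (q + 1) * a (t ^ p) :=
      le_add_of_nonneg_left (by positivity)

end CompRpowMulRpow

/-- The coefficient `a` of the generalized capillary operator
`u ↦ div (a (|∇u| ^ p) |∇u| ^ (p - 2) ∇u)`, extended to negative arguments by the same formula. -/
noncomputable def capillaryCoeff (s : ℝ) : ℝ :=
  1 + s / √(1 + s ^ 2)

theorem capillaryCoeff_eq_one_add_sin_arctan (s : ℝ) :
    capillaryCoeff s = 1 + Real.sin (Real.arctan s) := by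
  rw [capillaryCoeff, Real.sin_arctan]

theorem one_le_capillaryCoeff {s : ℝ} (hs : 0 ≤ s) : 1 ≤ capillaryCoeff s :=
  le_add_of_nonneg_right (by positivity)

theorem hasDerivAt_capillaryCoeff (s : ℝ) :
    HasDerivAt capillaryCoeff (Real.cos (Real.arctan s) * (1 / (1 + s ^ 2))) s := by
  rw [funext capillaryCoeff_eq_one_add_sin_arctan]
  exact (Real.hasDerivAt_arctan s).sin.const_add 1

theorem differentiable_capillaryCoeff : Differentiable ℝ capillaryCoeff :=
  fun s ↦ (hasDerivAt_capillaryCoeff s).differentiableAt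

theorem deriv_capillaryCoeff_nonneg (s : ℝ) : 0 ≤ deriv capillaryCoeff s := by
  rw [(hasDerivAt_capillaryCoeff s).deriv]
  exact mul_nonneg (Real.cos_arctan_pos s).le (by positivity)

/-- Verification of condition `(H_{a₃})` for the generalized capillary operator
(Example III). -/
theorem capillary_condition_Ha3
    (p : ℝ) (hp : 1 < p)
    (a : ℝ → ℝ) (ha : ∀ s : ℝ, a s = 1 + s / Real.sqrt (1 + s ^ 2))
    (g : ℝ → ℝ) (hg : ∀ t : ℝ, g t = a (t ^ p) * t ^ (p - 2)) :
    (∀ t : ℝ, 0 < t → DifferentiableAt ℝ g t) ∧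
      (∀ t : ℝ, 0 < t → t ^ (p - 2) ≤ g t) ∧
      (∀ t : ℝ, 0 < t → (p - 1) * t ^ (p - 2) ≤ g t + t * deriv g t) ∧
      (0 < min 1 (p - 1) ∧
        ∀ t : ℝ, 0 < t →
          min 1 (p - 1) * t ^ (p - 2) ≤ min (g t) (g t + t * deriv g t)) := by
  obtain rfl : a = capillaryCoeff := funext ha
  have g_eq : g = fun t ↦ capillaryCoeff (t ^ p) * t ^ (p - 2) := funext hg
  have one_le (t : ℝ) (ht : 0 < t) : 1 ≤ capillaryCoeff (t ^ p) :=
    one_le_capillaryCoeff (by positivity)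
  have differentiable_g (t : ℝ) (ht : 0 < t) : DifferentiableAt ℝ g t := by
    rw [g_eq]
    exact (hasDerivAt_comp_rpow_mul_rpow (hasDerivAt_capillaryCoeff _) ht.ne').differentiableAt
  have le_g (t : ℝ) (ht : 0 < t) : t ^ (p - 2) ≤ g t := by
    rw [hg]
    exact le_mul_of_one_le_left (by positivity) (one_le t ht)
  have le_deriv_flux (t : ℝ) (ht : 0 < t) : (p - 1) * t ^ (p - 2) ≤ g t + t * deriv g t := by
    rw [g_eq, show p - 1 = (p - 2 + 1) * 1 by ring]
    exact le_add_mul_deriv_comp_rpow_mul_rpow (differentiable_capillaryCoeff _)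
      (deriv_capillaryCoeff_nonneg _) (one_le t ht) (by linarith) (by linarith) ht
  refine ⟨differentiable_g, le_g, le_deriv_flux, lt_min one_pos (sub_pos.mpr hp), fun t ht ↦ ?_⟩
  rw [min_mul_of_nonneg _ _ (by positivity), one_mul]
  exact min_le_min (le_g t ht) (le_deriv_flux t ht)
end
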